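/- (Corollary 3) Let f : 𝕋 → ℝ be continuous, even, with mean value zero, with Fourier coefficients satisfying f̂(k) > 0 for all k ≠ 0 and ∑_{k∈ℤ} f̂(k) < ∞, and let (x_n)_{n≥1} be a greedy sequence for f with initial points x_1, …, x_M. Then (x_n) is uniformly distributed on 𝕋: for every continuous g : 𝕋 → ℂ, (1/n)·∑_{m=1}^{n} g(x_m) converges to ∫₀¹ g(x) dx as n → ∞. -/

import Mathlib

open MeasureTheory Filter

/-!
A new greedy point sees potential at most the spatial average `n ∫ f`, so the pair energy
`∑ᵢⱼ f (xᵢ - xⱼ)` of the first `n` points exceeds `n² ∫ f` by only `O(n)`. In Fourier space this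
excess is `∑_{k ≠ 0} f̂(k) |∑ⱼ e(k xⱼ)|²`, a sum of nonnegative terms, so every exponential sum with
`k ≠ 0` is `O(√n)`, and Weyl's criterion applies.
-/

open AddCircle ComplexConjugate Topology

section Weyl

variable {X : Type*} [TopologicalSpace X]

/-- The empirical mean `g ↦ (1 / n) ∑_{m = 1}^{n} g (x m)` as a continuous functional, so that
equicontinuity of the family in `n` can be used. It is the zero functional for `n = 0`, and the
value `x 0` never enters. -/
noncomputable def empiricalMean (x : ℕ → X) (n : ℕ) : C(X, ℂ) →L[ℂ] ℂ :=
  (1 / (n : ℂ)) • ∑ m ∈ Finset.Icc 1 n, ContinuousMap.evalCLM ℂ (x m)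

lemma empiricalMean_apply (x : ℕ → X) (n : ℕ) (g : C(X, ℂ)) :
    empiricalMean x n g = (1 / (n : ℂ)) * ∑ m ∈ Finset.Icc 1 n, g (x m) := by
  simp [empiricalMean]

lemma norm_empiricalMean_le [CompactSpace X] (x : ℕ → X) (n : ℕ) : ‖empiricalMean x n‖ ≤ 1 := by
  refine ContinuousLinearMap.opNorm_le_bound _ zero_le_one fun g => ?_
  have hsum : ‖∑ m ∈ Finset.Icc 1 n, g (x m)‖ ≤ n * ‖g‖ := by
    simpa using norm_sum_le_of_le (Finset.Icc 1 n) fun m _ => g.norm_coe_le_norm (x m)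
  calc ‖empiricalMean x n g‖ = 1 / n * ‖∑ m ∈ Finset.Icc 1 n, g (x m)‖ := by
        simp [empiricalMean_apply]
    _ ≤ 1 / n * (n * ‖g‖) := by gcongr
    _ = n / n * ‖g‖ := by ring
    _ ≤ 1 * ‖g‖ := by gcongr; exact div_self_le_one _

lemma empiricalMean_one (x : ℕ → X) {n : ℕ} (hn : n ≠ 0) : empiricalMean x n 1 = 1 := by
  simp [empiricalMean_apply, hn]

/-- Integration against a finite measure as a continuous functional on continuous functions, the
form in which the limit enters Weyl's criterion. -/
noncomputable def integralFunctional [CompactSpace X] [MeasurableSpace X] [OpensMeasurableSpace X]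
    (μ : Measure X) [IsFiniteMeasure μ] : C(X, ℂ) →L[ℂ] ℂ :=
  have integrable (p : C(X, ℂ)) : Integrable p μ :=
    p.continuous.integrable_of_hasCompactSupport (.of_compactSpace p)
  LinearMap.mkContinuous
    { toFun := fun p => ∫ t, p t ∂μ
      map_add' := fun p q => integral_add (integrable p) (integrable q)
      map_smul' := fun a p => integral_const_mul a p }
    (μ.real Set.univ)
    fun p => (norm_integral_le_of_norm_le_const (.of_forall p.norm_coe_le_norm)).trans_eq
      (mul_comm _ _)

lemma integralFunctional_apply [CompactSpace X] [MeasurableSpace X] [OpensMeasurableSpace X]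
    (μ : Measure X) [IsFiniteMeasure μ] (g : C(X, ℂ)) :
    integralFunctional μ g = ∫ t, g t ∂μ :=
  rfl

variable {T : ℝ} [Fact (0 < T)]

lemma tendsto_apply_of_tendsto_apply_fourier {ι : Type*} {l : Filter ι}
    {L : ι → C(AddCircle T, ℂ) →L[ℂ] ℂ} {Λ : C(AddCircle T, ℂ) →L[ℂ] ℂ} {C : ℝ}
    (hL : ∀ i, ‖L i‖ ≤ C)
    (h : ∀ k, Tendsto (fun i => L i (fourier k)) l (𝓝 (Λ (fourier k))))
    (g : C(AddCircle T, ℂ)) : Tendsto (fun i => L i g) l (𝓝 (Λ g)) := by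
  have hequi : Equicontinuous fun i => ⇑(L i) :=
    ((NormedSpace.equicontinuous_TFAE L).out 5 1 :).1 ⟨C, hL⟩
  have hclosed : IsClosed {p | Tendsto (fun i => L i p) l (𝓝 (Λ p))} :=
    hequi.isClosed_setOfPred_tendsto Λ.continuous
  have hspan : ∀ p ∈ Submodule.span ℂ (Set.range (@fourier T)),
      Tendsto (fun i => L i p) l (𝓝 (Λ p)) := by
    intro p hp
    induction hp using Submodule.span_induction with
    | mem p hp => obtain ⟨k, rfl⟩ := hp; exact h k
    | zero => simpa using tendsto_const_nhds
    | add p q _ _ hp hq => simpa using hp.add hq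
    | smul a p _ hp => simpa using hp.const_mul a
  have hg : g ∈ closure (Submodule.span ℂ (Set.range (@fourier T)) : Set C(AddCircle T, ℂ)) := by
    rw [← Submodule.topologicalClosure_coe, span_fourier_closure_eq_top]
    trivial
  exact closure_minimal hspan hclosed hg

lemma integral_fourier_eq_zero {k : ℤ} (hk : k ≠ 0) :
    ∫ t : AddCircle T, fourier k t ∂haarAddCircle = 0 := by
  simpa [fourierCoeff, hk.symm] using congrFun (fourierCoeff_fourier (T := T) k) 0

theorem tendsto_empiricalMean_of_tendsto_fourier {x : ℕ → AddCircle T}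
    (h : ∀ k : ℤ, k ≠ 0 → Tendsto (fun n => empiricalMean x n (fourier k)) atTop (𝓝 0))
    (g : C(AddCircle T, ℂ)) :
    Tendsto (fun n => empiricalMean x n g) atTop (𝓝 (∫ t, g t ∂haarAddCircle)) := by
  rw [← integralFunctional_apply]
  refine tendsto_apply_of_tendsto_apply_fourier (norm_empiricalMean_le x) (fun k => ?_) g
  rw [integralFunctional_apply]
  rcases eq_or_ne k 0 with rfl | hk
  · have hone : (fourier 0 : C(AddCircle T, ℂ)) = 1 := by ext; simp
    refine tendsto_const_nhds.congr' ?_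
    filter_upwards [eventually_ne_atTop 0] with n hn
    simp [hone, empiricalMean_one x hn]
  · rw [integral_fourier_eq_zero hk]
    exact h k hk

end Weyl

section Energy

variable {G ι : Type*} [AddGroup G] [MeasurableSpace G] {μ : Measure G} {f : G → ℝ}

/-- The pair energy of the points `x i`, `i ∈ s`, diagonal included, minus the value `|s|² ∫ f` it
would have if each point mass were replaced by the invariant probability measure `μ`. -/
noncomputable def energyExcess (μ : Measure G) (f : G → ℝ) (x : ι → G) (s : Finset ι) : ℝ :=
  ∑ i ∈ s, ∑ j ∈ s, f (x i - x j) - (s.card : ℝ) ^ 2 * ∫ t, f t ∂μ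

lemma energyExcess_insert [DecidableEq ι] (hf_even : ∀ t, f (-t) = f t) (x : ι → G)
    {s : Finset ι} {a : ι} (ha : a ∉ s) :
    energyExcess μ f x (insert a s) = energyExcess μ f x s +
      2 * (∑ k ∈ s, f (x a - x k) - s.card * ∫ t, f t ∂μ) + (f 0 - ∫ t, f t ∂μ) := by
  have hsymm : ∑ i ∈ s, f (x i - x a) = ∑ k ∈ s, f (x a - x k) :=
    Finset.sum_congr rfl fun i _ => by rw [← hf_even, neg_sub]
  simp only [energyExcess, Finset.sum_insert ha, Finset.card_insert_of_notMem ha, sub_self,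
    Finset.sum_add_distrib, hsymm]
  push_cast
  ring

lemma le_card_mul_integral_of_forall_le_sum [MeasurableAdd G] [IsProbabilityMeasure μ]
    [μ.IsAddRightInvariant] (hf : Integrable f μ) {x : ι → G} {s : Finset ι} {c : ℝ}
    (h : ∀ y, c ≤ ∑ k ∈ s, f (y - x k)) : c ≤ s.card * ∫ t, f t ∂μ := by
  have hint : ∀ k ∈ s, Integrable (fun y => f (y - x k)) μ := fun k _ => hf.comp_sub_right (x k)
  calc c = ∫ _, c ∂μ := by simp
    _ ≤ ∫ y, ∑ k ∈ s, f (y - x k) ∂μ :=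
        integral_mono (integrable_const c) (integrable_finsetSum s hint) h
    _ = s.card * ∫ t, f t ∂μ := by
        rw [integral_finsetSum s hint]
        simp [integral_sub_right_eq_self f]

/-- The sequence `x 1, x 2, …` is greedy for `f` with initial points `x 1, …, x M`: each later point
minimises the potential of its predecessors. The value `x 0` never enters. -/
def IsGreedyAfter (M : ℕ) (f : G → ℝ) (x : ℕ → G) : Prop :=
  ∀ n, M < n → ∀ y,
    ∑ k ∈ Finset.Icc 1 (n - 1), f (x n - x k) ≤ ∑ k ∈ Finset.Icc 1 (n - 1), f (y - x k)

namespace IsGreedyAfter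

variable [MeasurableAdd G] [IsProbabilityMeasure μ] [μ.IsAddRightInvariant]
  {M n : ℕ} {x : ℕ → G}

lemma energyExcess_succ_le (hx : IsGreedyAfter M f x) (hf_even : ∀ t, f (-t) = f t)
    (hf : Integrable f μ) (hn : M ≤ n) :
    energyExcess μ f x (Finset.Icc 1 (n + 1)) ≤
      energyExcess μ f x (Finset.Icc 1 n) + (f 0 - ∫ t, f t ∂μ) := by
  have hmin := le_card_mul_integral_of_forall_le_sum hf (hx (n + 1) (Nat.lt_succ_of_le hn))
  rw [Nat.add_sub_cancel] at hmin
  rw [← Finset.insert_Icc_right_eq_Icc_add_one (Nat.le_add_left 1 n),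
    energyExcess_insert hf_even x (by simp)]
  linarith

lemma energyExcess_le (hx : IsGreedyAfter M f x) (hf_even : ∀ t, f (-t) = f t)
    (hf : Integrable f μ) (hn : M ≤ n) :
    energyExcess μ f x (Finset.Icc 1 n) ≤
      energyExcess μ f x (Finset.Icc 1 M) + (n - M) * (f 0 - ∫ t, f t ∂μ) := by
  induction n, hn using Nat.le_induction with
  | base => simp
  | succ n hn ih =>
    have hstep := hx.energyExcess_succ_le hf_even hf hn
    push_cast
    linarith

end IsGreedyAfter

end Energy

section Fourier

variable {T : ℝ} {ι : Type*}

lemma sum_sum_fourier_sub (k : ℤ) (x : ι → AddCircle T) (s : Finset ι) :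
    ∑ i ∈ s, ∑ j ∈ s, fourier k (x i - x j) = ((‖∑ i ∈ s, fourier k (x i)‖ ^ 2 : ℝ) : ℂ) := by
  have hsub : ∀ a b : AddCircle T, fourier k (a - b) = fourier k a * conj (fourier k b) := by
    intro a b
    rw [← fourier_neg]
    simp [fourier_apply, toCircle_add, sub_eq_add_neg]
  rw [Complex.ofReal_pow, ← Complex.mul_conj', map_sum, Finset.sum_mul_sum]
  simp only [hsub]

variable [Fact (0 < T)]

lemma hasSum_fourierCoeff_mul_norm_sq {F : C(AddCircle T, ℂ)} (hF : Summable (fourierCoeff F))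
    (x : ι → AddCircle T) (s : Finset ι) :
    HasSum (fun k => fourierCoeff F k * ((‖∑ i ∈ s, fourier k (x i)‖ ^ 2 : ℝ) : ℂ))
      (∑ i ∈ s, ∑ j ∈ s, F (x i - x j)) := by
  have h : HasSum (fun k => ∑ i ∈ s, ∑ j ∈ s, fourierCoeff F k * fourier k (x i - x j))
      (∑ i ∈ s, ∑ j ∈ s, F (x i - x j)) :=
    hasSum_sum fun i _ => hasSum_sum fun j _ =>
      has_pointwise_sum_fourier_series_of_summable hF (x i - x j)
  simpa only [← Finset.mul_sum, sum_sum_fourier_sub] using h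

lemma re_fourierCoeff_ofReal_zero (f : AddCircle T → ℝ) :
    (fourierCoeff (fun t => (f t : ℂ)) 0).re = ∫ t, f t ∂haarAddCircle := by
  simp [fourierCoeff, integral_complex_ofReal]

lemma fourierCoeff_mul_norm_sq_le_energyExcess {f : AddCircle T → ℝ} (hf_cont : Continuous f)
    (hf_sum : Summable fun k : ℤ => ‖fourierCoeff (fun t => (f t : ℂ)) k‖)
    (hf_nonneg : ∀ k : ℤ, k ≠ 0 → 0 ≤ (fourierCoeff (fun t => (f t : ℂ)) k).re)
    {k : ℤ} (hk : k ≠ 0) (x : ι → AddCircle T) (s : Finset ι) :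
    (fourierCoeff (fun t => (f t : ℂ)) k).re * ‖∑ i ∈ s, fourier k (x i)‖ ^ 2 ≤
      energyExcess haarAddCircle f x s := by
  have hsum : HasSum
      (fun l => (fourierCoeff (fun t => (f t : ℂ)) l).re * ‖∑ i ∈ s, fourier l (x i)‖ ^ 2)
      (∑ i ∈ s, ∑ j ∈ s, f (x i - x j)) := by
    have hF := hasSum_fourierCoeff_mul_norm_sq (F := ⟨fun t => (f t : ℂ), by fun_prop⟩)
      hf_sum.of_norm x s
    simpa [Complex.re_mul_ofReal, -Complex.mul_re, -Complex.ofReal_pow]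
      using Complex.hasSum_re hF
  -- The mode `0` contributes exactly the `|s|² ∫ f` that the excess subtracts.
  have hpair := sum_le_hasSum {0, k} (fun l hl => mul_nonneg (hf_nonneg l (by grind))
    (sq_nonneg ‖∑ i ∈ s, fourier l (x i)‖)) hsum
  have hzero : ‖∑ i ∈ s, fourier 0 (x i)‖ = s.card := by simp
  rw [Finset.sum_pair hk.symm, re_fourierCoeff_ofReal_zero, hzero] at hpair
  rw [energyExcess]
  linarith

end Fourier

section Greedy

variable {T : ℝ} [Fact (0 < T)] {f : AddCircle T → ℝ} {M : ℕ} {x : ℕ → AddCircle T}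

lemma tendsto_add_sub_mul_div_sq_atTop (a b c : ℝ) :
    Tendsto (fun n : ℕ => (a + (n - c) * b) / (n : ℝ) ^ 2) atTop (𝓝 0) := by
  have hinv := tendsto_inv_atTop_nhds_zero_nat (𝕜 := ℝ)
  have h := ((hinv.pow 2).const_mul (a - c * b)).add (hinv.const_mul b)
  simp only [ne_eq, OfNat.ofNat_ne_zero, not_false_eq_true, zero_pow, mul_zero, add_zero] at h
  refine h.congr' ?_
  filter_upwards [eventually_ne_atTop 0] with n hn
  field_simp
  ring

lemma IsGreedyAfter.tendsto_empiricalMean_fourier (hx : IsGreedyAfter M f x)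
    (hf_cont : Continuous f) (hf_even : ∀ t, f (-t) = f t)
    (hf_sum : Summable fun k : ℤ => ‖fourierCoeff (fun t => (f t : ℂ)) k‖)
    (hf_nonneg : ∀ k : ℤ, k ≠ 0 → 0 ≤ (fourierCoeff (fun t => (f t : ℂ)) k).re)
    {k : ℤ} (hk : k ≠ 0) (hk_pos : 0 < (fourierCoeff (fun t => (f t : ℂ)) k).re) :
    Tendsto (fun n => empiricalMean x n (fourier k)) atTop (𝓝 0) := by
  set c := (fourierCoeff (fun t => (f t : ℂ)) k).re
  have hf : Integrable f haarAddCircle :=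
    hf_cont.integrable_of_hasCompactSupport (.of_compactSpace f)
  have hupper := (tendsto_add_sub_mul_div_sq_atTop
    (energyExcess haarAddCircle f x (Finset.Icc 1 M))
    (f 0 - ∫ t, f t ∂haarAddCircle) M).const_mul c⁻¹
  rw [mul_zero] at hupper
  have hsq : Tendsto (fun n => ‖empiricalMean x n (fourier k)‖ ^ 2) atTop (𝓝 0) := by
    refine squeeze_zero' (.of_forall fun n => sq_nonneg _) ?_ hupper
    filter_upwards [eventually_ge_atTop M] with n hn
    have hexcess := (fourierCoeff_mul_norm_sq_le_energyExcess hf_cont hf_sum hf_nonneg hk x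
      (Finset.Icc 1 n)).trans (hx.energyExcess_le hf_even hf hn)
    calc ‖empiricalMean x n (fourier k)‖ ^ 2
        = c⁻¹ * (c * ‖∑ m ∈ Finset.Icc 1 n, fourier k (x m)‖ ^ 2 / (n : ℝ) ^ 2) := by
          rw [empiricalMean_apply, norm_mul, norm_div, norm_one, Complex.norm_natCast]
          field_simp
      _ ≤ _ := by gcongr
  rw [tendsto_zero_iff_norm_tendsto_zero]
  simpa using hsq.sqrt

theorem greedy_uniformly_distributed_general (hf_cont : Continuous f)
    (hf_even : ∀ t, f (-t) = f t)
    (hf_sum : Summable fun k : ℤ => ‖fourierCoeff (fun t => (f t : ℂ)) k‖)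
    (hf_pos : ∀ k : ℤ, k ≠ 0 → 0 < (fourierCoeff (fun t => (f t : ℂ)) k).re)
    (hx : IsGreedyAfter M f x) {g : AddCircle T → ℂ} (hg : Continuous g) :
    Tendsto (fun n : ℕ => (1 / (n : ℂ)) * ∑ m ∈ Finset.Icc 1 n, g (x m))
      atTop (𝓝 (∫ t, g t ∂haarAddCircle)) := by
  have hweyl := tendsto_empiricalMean_of_tendsto_fourier
    (fun k hk => hx.tendsto_empiricalMean_fourier hf_cont hf_even hf_sum
      (fun l hl => (hf_pos l hl).le) hk (hf_pos k hk)) ⟨g, hg⟩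
  simpa only [empiricalMean_apply, ContinuousMap.coe_mk] using hweyl

end Greedy

/-- Corollary 3: For continuous even mean-zero `f : 𝕋 → ℝ` with summable
Fourier coefficients satisfying `f̂(k) > 0` for `k ≠ 0`, any greedy sequence `(x_n)` for
`f` is uniformly distributed on `𝕋`: for every continuous `g : 𝕋 → ℂ`,
`(1/n)·∑_{m=1}^{n} g(x_m) → ∫₀¹ g(x) dx`. -/
theorem greedy_uniformly_distributed
    (f : UnitAddCircle → ℝ) (hf_cont : Continuous f)
    (hf_even : ∀ t : UnitAddCircle, f (-t) = f t)
    (hf_mean : (∫ t : UnitAddCircle, f t) = 0)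
    (hf_sum : Summable fun k : ℤ => ‖fourierCoeff (fun t => (f t : ℂ)) k‖)
    (hf_pos : ∀ k : ℤ, k ≠ 0 → 0 < (fourierCoeff (fun t => (f t : ℂ)) k).re)
    (M : ℕ) (hM : 1 ≤ M) (x : ℕ → UnitAddCircle)
    (hgreedy : ∀ n : ℕ, M < n → ∀ y : UnitAddCircle,
      ∑ k ∈ Finset.Icc 1 (n - 1), f (x n - x k) ≤ ∑ k ∈ Finset.Icc 1 (n - 1), f (y - x k)) :
    ∀ g : UnitAddCircle → ℂ, Continuous g →
      Tendsto (fun n : ℕ => (1 / (n : ℂ)) * ∑ m ∈ Finset.Icc 1 n, g (x m))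
        atTop (nhds (∫ t : UnitAddCircle, g t)) := by
  intro g hg
  simpa only [integral_haarAddCircle, inv_one, one_smul] using
    greedy_uniformly_distributed_general hf_cont hf_even hf_sum hf_pos hgreedy hg
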